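/- (Proposition B(iii), simple singular case with negative derivative.) Consider the ODE p y′ + q y = r on U = (a,b), where p, q, r ∈ C^m(U), p has a zero of order l_p at x̂ ∈ U and q a zero of order l_q at x̂ with l_p = l_q + 1 (l_p, l_q < m), p and q have no other zeros in U, and r has a zero of order l_r ≥ l_q at x̂. Let h be the C¹ extension of p/q near x̂ (h(x̂) = 0) and assume h′(x̂) < 0. Then for every n ∈ ℕ with n ≤ m − l_q and n < |h′(x̂)|^{−1}, the solutions of the ODE of class C^n(U) form a two-parameter family: for every pair of real constants (c₋, c₊) there is a unique solution of class C^n(U) agreeing on (a, x̂) with the general solution with integration constant c₋ and on (x̂, b) with the one with integration constant c₊, and every C^n(U) solution arises this way. -/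

import Mathlib

/-!
Dividing `p`, `q`, `r` by the common factor `(x - xh) ^ lq` (`exists_factor`) turns the equation into
`h y' + y = g` with `h = p / q` and `g = r / q` of class `C^n`, `h xh = 0` and `h' xh < 0`.

Regularity of glued solutions. Consider more generally `h z' + e z = g` off `xh`. If `e xh > 0`,
then `z' = (e z - g) / (-h)` points away from the level `g xh / e xh` on the right of `xh`, with a
rate of order `1 / (x - xh)`; read towards `xh` every solution is driven to that level, so it
extends continuously (`tendsto_punctured`). Its derivative solves
`h u' + (e + h') u = g' - e' z`, an equation of the same kind, so by induction on `n` the solution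
is `C^n` as long as `e xh + n * h' xh > 0` (`bootstrap`, `extend_of_neg`). For `e = 1` this is
`n < |h' xh|⁻¹`. No condition links the two sides, hence two free constants.

The same induction, with `h = x - xh`, a positive integer constant `e`, and L'Hôpital's rule as
base case, gives the smoothness of the quotient `f / (x - xh) ^ l` needed in `exists_factor`.

Conversely, a solution has the form `exp (-w) * (W + c)` on each side because
`exp w * y - W` has zero derivative. For `n = 0` a solution is only assumed continuous, and `deriv`
takes the value `0` at points of non-differentiability, where the equation reads `y = r / q`.
That such points do not exist is `differentiableAt_of_relation`.
-/

/- Statement 18 (Proposition B(iii), simple singular case, negative derivative):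
if l_p = l_q + 1, l_r ≥ l_q and the C¹ extension h of p/q has h(x̂) = 0, h'(x̂) < 0,
then for every n ≤ m - l_q with n < |h'(x̂)|⁻¹ the C^n solutions of p y' + q y = r
form a two-parameter family, parametrized by the integration constants on the two
sides of x̂. -/

open Set

namespace SingularODE18

/-- `g` has a zero of order `l` at `xh`. -/
def HasZeroOfOrder (g : ℝ → ℝ) (xh : ℝ) (l : ℕ) : Prop :=
  (∀ k < l, iteratedDeriv k g xh = 0) ∧ iteratedDeriv l g xh ≠ 0

open Filter Topology

/-! ### Limits at the singular point -/

/-- A level `c` above `g xh / e xh` is eventually not reached by `z` on the right of `xh`: where `z` is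
above an intermediate level `c'`, it grows at least like `κ * log (x - xh)`, so that being above `c'`
close to `xh` contradicts the value of `z` at a fixed point. -/
theorem eventually_lt_right {xh b d : ℝ} (hb : xh < b) {h e g z : ℝ → ℝ}
    (hd : HasDerivAt h d xh) (hd0 : d < 0) (h0 : h xh = 0)
    (he : ContinuousAt e xh) (hg : ContinuousAt g xh) (he0 : 0 < e xh)
    (hz : ∀ x ∈ Ioo xh b, HasDerivAt z ((g x - e x * z x) / h x) x)
    {c : ℝ} (hc : g xh / e xh < c) : ∀ᶠ x in 𝓝[>] xh, z x < c := by
  obtain ⟨c', hc1, hc2⟩ := exists_between hc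
  -- near `xh`: `η ≤ e * c' - g`, `0 < e`, and `-h` lies between `0` and a multiple of `x - xh`
  set η := (e xh * c' - g xh) / 2 with hη
  have hpos : 0 < e xh * c' - g xh := by
    rw [div_lt_iff₀ he0] at hc1; linarith
  have ev1 : ∀ᶠ x in 𝓝 xh, η < e x * c' - g x :=
    ((he.mul continuousAt_const).sub hg).eventually
      (lt_mem_nhds (show η < e xh * c' - g xh by simp only [hη]; linarith))
  have ev2 : ∀ᶠ x in 𝓝 xh, 0 < e x := he.eventually (lt_mem_nhds he0)
  have ev3 : ∀ᶠ x in 𝓝[>] xh, d - 1 < h x / (x - xh) ∧ h x / (x - xh) < 0 := by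
    have := (hasDerivAt_iff_tendsto_slope.1 hd).mono_left
      (nhdsWithin_mono xh (fun x (hx : xh < x) => (ne_of_gt hx : x ∈ ({xh}ᶜ : Set ℝ))))
    filter_upwards [this.eventually (lt_mem_nhds (show d - 1 < d by linarith)),
      this.eventually (gt_mem_nhds hd0)] with x h1 h2
    rw [slope_def_field, h0, sub_zero] at h1 h2
    exact ⟨h1, h2⟩
  have ev : ∀ᶠ x in 𝓝[>] xh, (η < e x * c' - g x ∧ 0 < e x) ∧
      (d - 1 < h x / (x - xh) ∧ h x / (x - xh) < 0) :=
    ((ev1.and ev2).filter_mono nhdsWithin_le_nhds).and ev3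
  obtain ⟨u, hu, hsub⟩ := (mem_nhdsGT_iff_exists_Ioo_subset).1 ev
  simp only [mem_Ioi] at hu
  obtain ⟨x1, hx1, hx1'⟩ := exists_between (lt_min hu hb)
  obtain ⟨hx1u, hx1b⟩ := lt_min_iff.1 hx1'
  set κ := η / (1 - d) with hκ
  have hκ0 : 0 < κ := div_pos (by simp only [hη]; linarith) (by linarith)
  have key : ∀ x ∈ Ioc xh x1, c' ≤ z x → κ / (x - xh) ≤ (g x - e x * z x) / h x := by
    intro x hx hzx
    obtain ⟨⟨a1, a2⟩, a3, a4⟩ := hsub (⟨hx.1, lt_of_le_of_lt hx.2 hx1u⟩ : x ∈ Ioo xh u)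
    have hxp : 0 < x - xh := sub_pos.2 hx.1
    rw [lt_div_iff₀ hxp] at a3
    rw [div_lt_iff₀ hxp, zero_mul] at a4
    have : (g x - e x * z x) / h x = (e x * z x - g x) / (-h x) := by
      rw [← neg_div_neg_eq]; ring
    rw [this, hκ, div_div]
    have h1 : η ≤ e x * z x - g x := by nlinarith
    exact div_le_div₀ (by linarith [hκ0, hpos]) h1 (by linarith) (by linarith)
  have evlog : ∀ᶠ x in 𝓝[>] xh, Real.log (x - xh) <
      Real.log (x1 - xh) + (c' - z x1) / κ := by
    have : Tendsto (fun x => x - xh) (𝓝[>] xh) (𝓝[>] 0) := by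
      refine tendsto_nhdsWithin_iff.2 ⟨?_, ?_⟩
      · have : Tendsto (fun x => x - xh) (𝓝 xh) (𝓝 (xh - xh)) := tendsto_id.sub_const xh
        rw [sub_self] at this
        exact this.mono_left nhdsWithin_le_nhds
      · filter_upwards [self_mem_nhdsWithin] with x hx
        exact sub_pos.2 (mem_Ioi.1 hx)
    exact (Real.tendsto_log_nhdsGT_zero.comp this).eventually (eventually_lt_atBot _)
  filter_upwards [evlog, Ioo_mem_nhdsGT hx1] with x hxl hx
  by_contra! hcz
  have hc' : c' ≤ z x := by linarith
  have hIcc : ∀ t ∈ Icc x x1, t ∈ Ioo xh b := fun t ht =>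
    ⟨lt_of_lt_of_le hx.1 ht.1, lt_of_le_of_lt ht.2 hx1b⟩
  -- once above the level `c'`, the solution stays above it further right
  have hge : ∀ t ∈ Icc x x1, c' ≤ z t := by
    intro t ht
    have := image_le_of_deriv_right_lt_deriv_boundary (f := fun t => -z t)
      (f' := fun t => -((g t - e t * z t) / h t)) (a := x) (b := x1)
      (fun s hs => (hz s (hIcc s hs)).neg.continuousAt.continuousWithinAt)
      (fun s hs => (hz s (hIcc s (Ico_subset_Icc_self hs))).neg.hasDerivWithinAt)
      (B := fun _ => -c') (B' := fun _ => 0) (by simpa using hc')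
      (fun s => hasDerivAt_const s _) (by
        intro s hs hEq
        have hs' := hIcc s (Ico_subset_Icc_self hs)
        have h1 := key s ⟨hs'.1, hs.2.le⟩ (by linarith)
        have h2 : 0 < κ / (s - xh) := div_pos hκ0 (sub_pos.2 hs'.1)
        linarith) ht
    simpa using this
  have hder : ∀ t ∈ Icc x x1, HasDerivAt (fun t => z t - κ * Real.log (t - xh))
      ((g t - e t * z t) / h t - κ * (1 / (t - xh))) t := fun t ht =>
    (hz t (hIcc t ht)).sub
      ((((hasDerivAt_id t).sub_const xh).log (ne_of_gt (sub_pos.2 (hIcc t ht).1))).const_mul κ)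
  have hmono : MonotoneOn (fun t => z t - κ * Real.log (t - xh)) (Icc x x1) := by
    refine monotoneOn_of_deriv_nonneg (convex_Icc _ _)
      (fun t ht => (hder t ht).continuousAt.continuousWithinAt)
      (fun t ht => (hder t (interior_subset ht)).differentiableAt.differentiableWithinAt) ?_
    intro t ht
    have ht' := interior_subset ht
    rw [(hder t ht').deriv, mul_one_div]
    exact sub_nonneg.2 (key t ⟨(hIcc t ht').1, ht'.2⟩ (hge t ht'))
  have := hmono (left_mem_Icc.2 hx.2.le) (right_mem_Icc.2 hx.2.le) hx.2.le
  simp only at this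
  have h3 : κ * Real.log (x - xh) < κ * (Real.log (x1 - xh) + (c' - z x1) / κ) :=
    mul_lt_mul_of_pos_left hxl hκ0
  rw [mul_add, mul_div_cancel₀ _ hκ0.ne'] at h3
  linarith

theorem tendsto_right {xh b d : ℝ} (hb : xh < b) {h e g z : ℝ → ℝ}
    (hd : HasDerivAt h d xh) (hd0 : d < 0) (h0 : h xh = 0)
    (he : ContinuousAt e xh) (hg : ContinuousAt g xh) (he0 : 0 < e xh)
    (hz : ∀ x ∈ Ioo xh b, HasDerivAt z ((g x - e x * z x) / h x) x) :
    Tendsto z (𝓝[>] xh) (𝓝 (g xh / e xh)) := by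
  refine tendsto_order.2 ⟨fun c hc => ?_, fun c hc =>
    eventually_lt_right hb hd hd0 h0 he hg he0 hz hc⟩
  -- the lower bound is the upper bound for `-z`, which solves the equation with `-g`
  have := eventually_lt_right hb (g := fun x => -g x) (z := fun x => -z x) hd hd0 h0 he hg.neg he0
    (fun x hx => by
      refine (hz x hx).fun_neg.congr_deriv ?_
      rw [← neg_div]; ring) (c := -c) (by rw [neg_div]; linarith)
  filter_upwards [this] with x hx
  linarith

/-- Every solution of `h z' + e z = g` off `xh` has the same limit at `xh`, from both sides, when
`h xh = 0`, `h' xh < 0` and `e xh > 0`. -/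
theorem tendsto_punctured {a b xh d : ℝ} (hx : xh ∈ Ioo a b) {h e g z : ℝ → ℝ}
    (hd : HasDerivAt h d xh) (hd0 : d < 0) (h0 : h xh = 0)
    (he : ContinuousAt e xh) (hg : ContinuousAt g xh) (he0 : 0 < e xh)
    (hz : ∀ x ∈ Ioo a b, x ≠ xh → HasDerivAt z ((g x - e x * z x) / h x) x) :
    Tendsto z (𝓝[≠] xh) (𝓝 (g xh / e xh)) := by
  rw [← Iio_union_Ioi, nhdsWithin_union]
  refine Tendsto.sup ?_ (tendsto_right hx.2 hd hd0 h0 he hg he0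
    (fun x hx' => hz x ⟨hx.1.trans hx'.1, hx'.2⟩ (ne_of_gt hx'.1)))
  -- the reflection `x ↦ -x` preserves the form of the equation, with `h` replaced by `-h (-x)`
  have hneg : HasDerivAt (fun x : ℝ => -x) (-1) (-xh) := hasDerivAt_neg (-xh)
  have cneg : ContinuousAt (fun x : ℝ => -x) (-xh) := continuous_neg.continuousAt
  have hd' : HasDerivAt (fun x => -h (-x)) d (-xh) := by
    have := (HasDerivAt.comp (-xh) (h := fun x : ℝ => -x) (h₂ := h) (by simpa using hd) hneg).fun_neg
    simpa only [Function.comp_def, mul_neg, mul_one, neg_neg] using this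
  have := tendsto_right (xh := -xh) (b := -a) (by linarith [hx.1])
    (h := fun x => -h (-x)) (e := fun x => e (-x)) (g := fun x => g (-x)) (z := fun x => z (-x))
    hd' hd0 (by simp [h0])
    (ContinuousAt.comp (by simpa using he) cneg) (ContinuousAt.comp (by simpa using hg) cneg)
    (by simpa using he0) (fun x hx' => by
      have h1 := hz (-x) ⟨by linarith [hx'.2], by linarith [hx'.1, hx.2]⟩
        (by have := hx'.1; intro hh; linarith)
      have := HasDerivAt.comp x (h := fun x : ℝ => -x) (h₂ := z) h1 (hasDerivAt_neg x)
      simp only [Function.comp_def] at this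
      refine this.congr_deriv ?_
      rw [div_neg]; ring)
  simp only [neg_neg] at this
  have hcomp : Tendsto (fun x : ℝ => -x) (𝓝[<] xh) (𝓝[>] (-xh)) := tendsto_neg_nhdsLT
  simpa [Function.comp_def] using this.comp hcomp

/-! ### Smooth extension across the singular point -/

/-- Local form of the extension of a derivative across a point. -/
theorem hasDerivAt_of_punctured {a b xh : ℝ} (hx : xh ∈ Ioo a b) {y y1 : ℝ → ℝ}
    (hy : ContinuousAt y xh) (hy1 : ContinuousAt y1 xh)
    (hder : ∀ x ∈ Ioo a b, x ≠ xh → HasDerivAt y (y1 x) x) : HasDerivAt y (y1 xh) xh := by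
  rw [hasDerivAt_iff_tendsto_slope]
  have hmem : ∀ᶠ x in 𝓝[≠] xh, x ∈ Ioo a b := mem_nhdsWithin_of_mem_nhds (isOpen_Ioo.mem_nhds hx)
  have hne : ∀ᶠ x in 𝓝[≠] xh, x ≠ xh := self_mem_nhdsWithin
  have := HasDerivAt.lhopital_zero_nhdsNE (a := xh) (l := 𝓝 (y1 xh)) (f := fun x => y x - y xh)
    (f' := y1) (g := fun x => x - xh) (g' := fun _ => 1)
    (by filter_upwards [hmem, hne] with x h1 h2 using (hder x h1 h2).sub_const _)
    (by filter_upwards with x using (hasDerivAt_id x).sub_const _)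
    (by simp)
    (by
      have : Tendsto (fun x => y x - y xh) (𝓝 xh) (𝓝 (y xh - y xh)) := hy.sub_const _
      rw [sub_self] at this
      exact this.mono_left nhdsWithin_le_nhds)
    (by
      have : Tendsto (fun x => x - xh) (𝓝 xh) (𝓝 (xh - xh)) := tendsto_id.sub_const _
      rw [sub_self] at this
      exact this.mono_left nhdsWithin_le_nhds)
    (by simpa using hy1.mono_left nhdsWithin_le_nhds)
  refine this.congr (fun x => ?_)
  rw [slope_def_field]

theorem hasDerivAt_congr_off {a b xh x v : ℝ} {y z : ℝ → ℝ} (hx : x ∈ Ioo a b) (hne : x ≠ xh)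
    (heq : ∀ t ∈ Ioo a b, t ≠ xh → y t = z t) (hz : HasDerivAt z v x) : HasDerivAt y v x := by
  refine hz.congr_of_eventuallyEq ?_
  filter_upwards [isOpen_Ioo.mem_nhds hx, isOpen_ne.mem_nhds hne] with t h1 h2 using heq t h1 h2

/-- Regularity induction for `h z' + e z = g`, where `h` vanishes at most at `xh`. The predicate
`Adm n e z` is the admissibility condition at level `n`: it must force the continuous extension
(`base`) and pass to the differentiated equation, solved by `z' = (g - e z) / h` with `e` replaced
by `e + h'` (`step`). -/
theorem bootstrap {a b xh : ℝ} (hx : xh ∈ Ioo a b) {h : ℝ → ℝ}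
    (hh0 : ∀ x ∈ Ioo a b, x ≠ xh → h x ≠ 0)
    (Adm : ℕ → (ℝ → ℝ) → (ℝ → ℝ) → Prop)
    (base : ∀ n e g z, Adm n e z → ContinuousOn e (Ioo a b) → ContinuousOn g (Ioo a b) →
      (∀ x ∈ Ioo a b, x ≠ xh → HasDerivAt z ((g x - e x * z x) / h x) x) →
      Tendsto z (𝓝[≠] xh) (𝓝 (g xh / e xh)))
    (mono : ∀ n e z, Adm (n + 1) e z → Adm n e z)
    (step : ∀ n e g z (y : ℝ → ℝ), Adm (n + 1) e z → ContinuousOn g (Ioo a b) →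
      (∀ x ∈ Ioo a b, x ≠ xh → y x = z x) →
      Adm n (fun x => e x + deriv h x) (fun x => (g x - e x * y x) / h x)) :
    ∀ (n : ℕ) (e g z : ℝ → ℝ), Adm n e z →
      ContDiffOn ℝ n h (Ioo a b) → ContDiffOn ℝ n e (Ioo a b) → ContDiffOn ℝ n g (Ioo a b) →
      (∀ x ∈ Ioo a b, x ≠ xh → HasDerivAt z ((g x - e x * z x) / h x) x) →
      ∃ y : ℝ → ℝ, ContDiffOn ℝ n y (Ioo a b) ∧ (∀ x ∈ Ioo a b, x ≠ xh → y x = z x) ∧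
        y xh = g xh / e xh := by
  intro n
  induction n with
  | zero =>
    intro e g z hA _ he hg hz
    refine ⟨Function.update z xh (g xh / e xh), ?_,
      fun x _ hne => Function.update_of_ne hne _ _, Function.update_self _ _ _⟩
    rw [Nat.cast_zero, contDiffOn_zero]
    intro x hxI
    refine ContinuousAt.continuousWithinAt ?_
    by_cases hne : x = xh
    · subst hne
      exact continuousAt_update_same.2 (base 0 e g z hA he.continuousOn hg.continuousOn hz)
    · exact (hasDerivAt_congr_off hxI hne
        (fun t _ ht => Function.update_of_ne ht _ _) (hz x hxI hne)).continuousAt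
  | succ n ih =>
    intro e g z hA hh he hg hz
    have hle : (n : WithTop ℕ∞) ≤ ((n + 1 : ℕ) : WithTop ℕ∞) := by exact_mod_cast Nat.le_succ n
    obtain ⟨y, hyC, hyz, hy0⟩ := ih e g z (mono n e z hA) (hh.of_le hle) (he.of_le hle)
      (hg.of_le hle) hz
    have hy : ∀ x ∈ Ioo a b, x ≠ xh → HasDerivAt y ((g x - e x * y x) / h x) x :=
      fun x hxI hne => hasDerivAt_congr_off hxI hne hyz (by
        rw [hyz x hxI hne]; exact hz x hxI hne)
    have hd : ∀ f : ℝ → ℝ, ContDiffOn ℝ (n + 1 : ℕ) f (Ioo a b) →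
        (∀ x ∈ Ioo a b, HasDerivAt f (deriv f x) x) ∧ ContDiffOn ℝ n (deriv f) (Ioo a b) := by
      intro f hf
      rw [Nat.cast_add, Nat.cast_one, contDiffOn_succ_iff_deriv_of_isOpen isOpen_Ioo] at hf
      exact ⟨fun x hxI => (hf.1.differentiableAt (isOpen_Ioo.mem_nhds hxI)).hasDerivAt, hf.2.2⟩
    obtain ⟨hhd, hhd'⟩ := hd h hh
    obtain ⟨hed, hed'⟩ := hd e he
    obtain ⟨hgd, hgd'⟩ := hd g hg
    -- `y'` solves the differentiated equation `h u' + (e + h') u = g' - e' y`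
    obtain ⟨y1, hy1C, hy1z, -⟩ := ih (fun x => e x + deriv h x)
      (fun x => deriv g x - deriv e x * y x) (fun x => (g x - e x * y x) / h x)
      (step n e g z y hA hg.continuousOn hyz) (hh.of_le hle) ((he.of_le hle).add hhd')
      (hgd'.sub (hed'.mul hyC)) (by
        intro x hxI hne
        have hh := hh0 x hxI hne
        refine (((hgd x hxI).fun_sub ((hed x hxI).fun_mul (hy x hxI hne))).fun_div
          (hhd x hxI) hh).congr_deriv ?_
        field_simp
        ring)
    have hy1 : ∀ x ∈ Ioo a b, HasDerivAt y (y1 x) x := by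
      have hoff : ∀ x ∈ Ioo a b, x ≠ xh → HasDerivAt y (y1 x) x := fun x hxI hne => by
        rw [hy1z x hxI hne]; exact hy x hxI hne
      intro x hxI
      by_cases hne : x = xh
      · subst hne
        exact hasDerivAt_of_punctured hxI (hyC.continuousOn.continuousAt (isOpen_Ioo.mem_nhds hxI))
          (hy1C.continuousOn.continuousAt (isOpen_Ioo.mem_nhds hxI)) hoff
      · exact hoff x hxI hne
    refine ⟨y, ?_, hyz, hy0⟩
    rw [Nat.cast_add, Nat.cast_one, contDiffOn_succ_iff_deriv_of_isOpen isOpen_Ioo]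
    refine ⟨fun x hxI => (hy1 x hxI).differentiableAt.differentiableWithinAt, by simp, ?_⟩
    exact hy1C.congr (fun x hxI => (hy1 x hxI).deriv)

/-- A solution of `h z' + e z = g` off `xh` extends to a `C^n` function, provided
`e xh + n * h' xh > 0`. -/
theorem extend_of_neg {a b xh : ℝ} (hx : xh ∈ Ioo a b) {h : ℝ → ℝ}
    (hh1 : ContDiffOn ℝ 1 h (Ioo a b)) (hh0 : ∀ x ∈ Ioo a b, x ≠ xh → h x ≠ 0)
    (h0 : h xh = 0) (hneg : deriv h xh < 0) (n : ℕ) (e g z : ℝ → ℝ)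
    (hpos : 0 < e xh + n * deriv h xh)
    (hh : ContDiffOn ℝ n h (Ioo a b)) (he : ContDiffOn ℝ n e (Ioo a b))
    (hg : ContDiffOn ℝ n g (Ioo a b))
    (hz : ∀ x ∈ Ioo a b, x ≠ xh → HasDerivAt z ((g x - e x * z x) / h x) x) :
    ∃ y : ℝ → ℝ, ContDiffOn ℝ n y (Ioo a b) ∧ (∀ x ∈ Ioo a b, x ≠ xh → y x = z x) := by
  have hmem := isOpen_Ioo.mem_nhds hx
  obtain ⟨y, h1, h2, -⟩ := bootstrap hx hh0 (fun n e _ => 0 < e xh + n * deriv h xh)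
    (fun n e g z hA he hg hz => tendsto_punctured hx
      ((hh1.differentiableOn one_ne_zero).differentiableAt hmem).hasDerivAt
      hneg h0 (he.continuousAt hmem) (hg.continuousAt hmem)
      (by
        have : (n : ℝ) * deriv h xh ≤ 0 := mul_nonpos_of_nonneg_of_nonpos n.cast_nonneg hneg.le
        linarith) hz)
    (fun n e z hA => by push_cast at hA; linarith)
    (fun n e g z y hA _ _ => by push_cast at hA; linarith)
    n e g z hpos hh he hg hz
  exact ⟨y, h1, h2⟩

/-- The solution of `(x - xh) z' + (j + 1) z = g` with `(x - xh) ^ (j + 1) * z → 0` is as smooth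
as `g`. -/
theorem extend_of_pow {a b xh : ℝ} (hx : xh ∈ Ioo a b) (n j : ℕ) (g z : ℝ → ℝ)
    (hlim : Tendsto (fun x => (x - xh) ^ (j + 1) * z x) (𝓝[≠] xh) (𝓝 0))
    (hg : ContDiffOn ℝ n g (Ioo a b))
    (hz : ∀ x ∈ Ioo a b, x ≠ xh → HasDerivAt z ((g x - (j + 1 : ℝ) * z x) / (x - xh)) x) :
    ∃ y : ℝ → ℝ, ContDiffOn ℝ n y (Ioo a b) ∧ (∀ x ∈ Ioo a b, x ≠ xh → y x = z x) ∧
      y xh = g xh / (j + 1) := by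
  have hmem := isOpen_Ioo.mem_nhds hx
  have hmem' : ∀ᶠ x in 𝓝[≠] xh, x ∈ Ioo a b := mem_nhdsWithin_of_mem_nhds hmem
  have hne' : ∀ᶠ x in 𝓝[≠] xh, x ≠ xh := self_mem_nhdsWithin
  have hcd : ∀ N : WithTop ℕ∞, ContDiffOn ℝ N (fun x : ℝ => x - xh) (Ioo a b) := fun N =>
    (contDiff_id.sub contDiff_const).contDiffOn
  have hder : ∀ x, HasDerivAt (fun x : ℝ => x - xh) 1 x := fun x => (hasDerivAt_id x).sub_const _
  have hpow : ∀ k : ℕ, ∀ x, HasDerivAt (fun x : ℝ => (x - xh) ^ (k + 1))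
      ((k + 1 : ℝ) * (x - xh) ^ k) x := fun k x => by
    simpa using (hder x).fun_pow (k + 1)
  have hpow0 : ∀ k : ℕ, Tendsto (fun x : ℝ => (x - xh) ^ (k + 1)) (𝓝[≠] xh) (𝓝 0) := fun k => by
    have : Tendsto (fun x : ℝ => (x - xh) ^ (k + 1)) (𝓝 xh) (𝓝 ((xh - xh) ^ (k + 1))) :=
      (hpow k xh).continuousAt
    simp only [sub_self, ne_eq, Nat.add_eq_zero_iff, one_ne_zero, and_false, not_false_eq_true,
      zero_pow] at this
    exact this.mono_left nhdsWithin_le_nhds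
  refine bootstrap hx (fun x _ hne => sub_ne_zero.2 hne)
    (fun _ e z => ∃ k : ℕ, (∀ x, e x = k + 1) ∧
      Tendsto (fun x => (x - xh) ^ (k + 1) * z x) (𝓝[≠] xh) (𝓝 0)) ?_ (fun _ _ _ hA => hA) ?_
    n (fun _ => (j + 1 : ℝ)) g z ⟨j, fun _ => rfl, hlim⟩ (hcd n) contDiffOn_const hg hz
  · rintro - e g z ⟨k, hk, hzk⟩ - hg hz
    -- L'Hôpital for `(x - xh) ^ (k + 1) * z` over `(x - xh) ^ (k + 1)`
    have hk0 : (k + 1 : ℝ) ≠ 0 := by positivity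
    have := HasDerivAt.lhopital_zero_nhdsNE (a := xh) (l := 𝓝 (g xh / e xh))
      (f := fun x => (x - xh) ^ (k + 1) * z x) (f' := fun x => (x - xh) ^ k * g x)
      (g := fun x => (x - xh) ^ (k + 1)) (g' := fun x => (k + 1 : ℝ) * (x - xh) ^ k)
      (by
        filter_upwards [hmem', hne'] with x h1 h2
        have h3 := sub_ne_zero.2 h2
        refine ((hpow k x).fun_mul (hz x h1 h2)).congr_deriv ?_
        rw [hk]
        field_simp
        ring)
      (Eventually.of_forall (hpow k))
      (by
        filter_upwards [hne'] with x h2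
        exact mul_ne_zero hk0 (pow_ne_zero _ (sub_ne_zero.2 h2)))
      hzk (hpow0 k)
      (by
        rw [hk]
        have h4 : Tendsto (fun x => g x / (k + 1 : ℝ)) (𝓝[≠] xh) (𝓝 (g xh / (k + 1 : ℝ))) :=
          ((hg.continuousAt hmem).div_const _).mono_left nhdsWithin_le_nhds
        refine h4.congr' ?_
        filter_upwards [hne'] with x h2
        have h3 := sub_ne_zero.2 h2
        field_simp)
    refine this.congr' ?_
    filter_upwards [hne'] with x h2
    have h3 := sub_ne_zero.2 h2
    field_simp
  · rintro - e g z y ⟨k, hk, hzk⟩ hg hyz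
    refine ⟨k + 1, fun x => by simp only [hk, (hder x).deriv]; push_cast; ring, ?_⟩
    have h4 : Tendsto (fun x => (x - xh) ^ (k + 1) * g x - (k + 1 : ℝ) * ((x - xh) ^ (k + 1) * z x))
        (𝓝[≠] xh) (𝓝 (0 * g xh - (k + 1 : ℝ) * 0)) :=
      ((hpow0 k).mul ((hg.continuousAt hmem).mono_left nhdsWithin_le_nhds)).sub (hzk.const_mul _)
    rw [zero_mul, mul_zero, sub_zero] at h4
    refine h4.congr' ?_
    filter_upwards [hmem', hne'] with x h1 h2
    have h3 := sub_ne_zero.2 h2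
    rw [hyz x h1 h2, hk]
    field_simp
    ring

/-- Division by `(x - xh) ^ l` of a function with vanishing derivatives of order `< l` costs `l` orders
of differentiability; the quotient takes the Taylor coefficient as its value at `xh`. -/
theorem exists_factor {a b xh : ℝ} (hx : xh ∈ Ioo a b) (n l : ℕ) :
    ∀ f : ℝ → ℝ, ContDiffOn ℝ (n + l : ℕ) f (Ioo a b) → (∀ k < l, iteratedDeriv k f xh = 0) →
    ∃ F : ℝ → ℝ, ContDiffOn ℝ n F (Ioo a b) ∧ (∀ x ∈ Ioo a b, f x = (x - xh) ^ l * F x) ∧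
      F xh = iteratedDeriv l f xh / l.factorial := by
  induction l with
  | zero => exact fun f hf _ => ⟨f, by simpa using hf, by simp, by simp⟩
  | succ l ih =>
    intro f hf hk
    have hmem := isOpen_Ioo.mem_nhds hx
    have hf' := hf
    rw [← add_assoc, Nat.cast_add, Nat.cast_one,
      contDiffOn_succ_iff_deriv_of_isOpen isOpen_Ioo] at hf'
    obtain ⟨G, hGC, hG, hG0⟩ := ih (deriv f) hf'.2.2 (fun k hkl => by
      rw [← iteratedDeriv_succ']; exact hk _ (by omega))
    have hf0 : f xh = 0 := by simpa using hk 0 (by omega)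
    -- `z = f / (x - xh) ^ (l + 1)` solves `(x - xh) z' + (l + 1) z = f' / (x - xh) ^ l`
    obtain ⟨F, hFC, hF, hF0⟩ := extend_of_pow hx n l G (fun x => f x / (x - xh) ^ (l + 1))
      (by
        have h1 : Tendsto f (𝓝[≠] xh) (𝓝 0) := by
          rw [← hf0]
          exact (hf.continuousOn.continuousAt hmem).mono_left nhdsWithin_le_nhds
        refine h1.congr' ?_
        filter_upwards [self_mem_nhdsWithin] with x h2
        have h3 : x - xh ≠ 0 := sub_ne_zero.2 h2
        field_simp)
      hGC (by
        intro x hxI hne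
        have h3 : x - xh ≠ 0 := sub_ne_zero.2 hne
        have hfd := (hf'.1.differentiableAt (isOpen_Ioo.mem_nhds hxI)).hasDerivAt
        refine (hfd.fun_div (((hasDerivAt_id' x).sub_const xh).fun_pow (l + 1))
          (pow_ne_zero _ h3)).congr_deriv ?_
        rw [hG x hxI, Nat.add_sub_cancel]
        push_cast
        field_simp
        ring)
    refine ⟨F, hFC, fun x hxI => ?_, ?_⟩
    · by_cases hne : x = xh
      · subst hne; simp [hf0]
      · have h3 : x - xh ≠ 0 := sub_ne_zero.2 hne
        rw [hF x hxI hne]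
        field_simp
    · rw [hF0, hG0, iteratedDeriv_succ', Nat.factorial_succ, div_div]
      push_cast
      ring

/-! ### Differentiability of continuous solutions -/

/-- Between two points where `y = g`, the derivative of `g` is somewhere bounded by a bound for the
derivative of `y`: either `y = g` on the whole segment, or the mean value theorem applies to both
functions on a gap of the coincidence set. -/
theorem exists_deriv_le_between {α β ε : ℝ} (hαβ : α < β) {g y : ℝ → ℝ}
    (hy : ContinuousOn y (Icc α β)) (hg : ∀ t ∈ Icc α β, DifferentiableAt ℝ g t)
    (hα : y α = g α) (hβ : y β = g β) (hb : ∀ t ∈ Icc α β, |deriv y t| ≤ ε)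
    (hd : ∀ t ∈ Icc α β, y t ≠ g t → DifferentiableAt ℝ y t) :
    ∃ t ∈ Icc α β, |deriv g t| ≤ ε := by
  have hgc : ContinuousOn g (Icc α β) := fun t ht => (hg t ht).continuousAt.continuousWithinAt
  by_cases hall : ∀ t ∈ Ioo α β, y t = g t
  · obtain ⟨t, ht⟩ := nonempty_Ioo.2 hαβ
    refine ⟨t, Ioo_subset_Icc_self ht, ?_⟩
    have : y =ᶠ[𝓝 t] g := by
      filter_upwards [isOpen_Ioo.mem_nhds ht] with s hs using hall s hs
    rw [← this.deriv_eq]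
    exact hb t (Ioo_subset_Icc_self ht)
  · push Not at hall
    obtain ⟨s, hs, hne⟩ := hall
    have hclosed : ∀ u v, Icc u v ⊆ Icc α β → IsCompact (Icc u v ∩ {t | y t - g t = 0}) := by
      intro u v huv
      have : IsClosed (Icc u v ∩ (fun t => y t - g t) ⁻¹' {0}) :=
        ((hy.mono huv).sub (hgc.mono huv)).preimage_isClosed_of_isClosed isClosed_Icc
          isClosed_singleton
      exact (isCompact_Icc (a := u) (b := v)).of_isClosed_subset this inter_subset_left
    have hsubL : Icc α s ⊆ Icc α β := Icc_subset_Icc_right hs.2.le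
    have hsubR : Icc s β ⊆ Icc α β := Icc_subset_Icc_left hs.1.le
    -- the maximal interval around `s` on which `y ≠ g`
    obtain ⟨u, ⟨hu1, hu2⟩, hu3⟩ := (hclosed α s hsubL).exists_isGreatest
      ⟨α, left_mem_Icc.2 hs.1.le, sub_eq_zero.2 hα⟩
    obtain ⟨v, ⟨hv1, hv2⟩, hv3⟩ := (hclosed s β hsubR).exists_isLeast
      ⟨β, right_mem_Icc.2 hs.2.le, sub_eq_zero.2 hβ⟩
    have hu2 : y u = g u := sub_eq_zero.1 hu2
    have hv2 : y v = g v := sub_eq_zero.1 hv2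
    have hus : u < s := lt_of_le_of_ne hu1.2 (fun hh => hne (hh ▸ hu2))
    have hsv : s < v := lt_of_le_of_ne hv1.1 (fun hh => hne (hh ▸ hv2))
    have hsub : Icc u v ⊆ Icc α β := Icc_subset_Icc hu1.1 hv1.2
    have hneq : ∀ t ∈ Ioo u v, y t ≠ g t := by
      intro t ht heq
      rcases le_total t s with hts | hts
      · exact absurd (hu3 ⟨⟨hu1.1.trans ht.1.le, hts⟩, sub_eq_zero.2 heq⟩) (not_le.2 ht.1)
      · exact absurd (hv3 ⟨⟨hts, ht.2.le.trans hv1.2⟩, sub_eq_zero.2 heq⟩) (not_le.2 ht.2)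
    obtain ⟨t1, ht1, e1⟩ := exists_deriv_eq_slope y (hus.trans hsv) (hy.mono hsub)
      (fun t ht => (hd t (hsub (Ioo_subset_Icc_self ht)) (hneq t ht)).differentiableWithinAt)
    obtain ⟨t2, ht2, e2⟩ := exists_deriv_eq_slope g (hus.trans hsv) (hgc.mono hsub)
      (fun t ht => (hg t (hsub (Ioo_subset_Icc_self ht))).differentiableWithinAt)
    refine ⟨t2, hsub (Ioo_subset_Icc_self ht2), ?_⟩
    rw [e2, ← hu2, ← hv2, ← e1]
    exact hb t1 (hsub (Ioo_subset_Icc_self ht1))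

/-- The hypothesis `hb` bounds `deriv y` also where `y` is not differentiable, where it says nothing;
those points are controlled by `hZ`. -/
theorem abs_sub_le_right {x0 x ε : ℝ} (hx : x0 ≤ x) {g y : ℝ → ℝ}
    (hy : ContinuousOn y (Icc x0 x)) (hgc : ContinuousOn g (Icc x0 x)) (h0 : y x0 = g x0)
    (hb : ∀ t ∈ Icc x0 x, |deriv y t| ≤ ε)
    (hd : ∀ t ∈ Icc x0 x, y t ≠ g t → DifferentiableAt ℝ y t)
    (hZ : ∀ t ∈ Icc x0 x, y t = g t → |g t - g x0| ≤ ε * (t - x0)) :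
    |y x - y x0| ≤ ε * (x - x0) := by
  have hcpt : IsCompact (Icc x0 x ∩ {t | y t - g t = 0}) := by
    have : IsClosed (Icc x0 x ∩ (fun t => y t - g t) ⁻¹' {0}) :=
      (hy.sub hgc).preimage_isClosed_of_isClosed isClosed_Icc isClosed_singleton
    exact (isCompact_Icc (a := x0) (b := x)).of_isClosed_subset this inter_subset_left
  -- the last point before `x` at which `y = g`
  obtain ⟨u, ⟨hu1, hu2⟩, hu3⟩ := hcpt.exists_isGreatest ⟨x0, left_mem_Icc.2 hx, sub_eq_zero.2 h0⟩
  have hu2 : y u = g u := sub_eq_zero.1 hu2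
  have h1 : |y u - y x0| ≤ ε * (u - x0) := by
    rw [hu2, h0]; exact hZ u hu1 hu2
  rcases hu1.2.eq_or_lt with rfl | hux
  · exact h1
  have hsub : Icc u x ⊆ Icc x0 x := Icc_subset_Icc_left hu1.1
  obtain ⟨t, ht, e1⟩ := exists_deriv_eq_slope y hux (hy.mono hsub) (fun t ht =>
    (hd t (hsub (Ioo_subset_Icc_self ht)) (fun heq => absurd
      (hu3 ⟨hsub (Ioo_subset_Icc_self ht), sub_eq_zero.2 heq⟩)
      (not_le.2 ht.1))).differentiableWithinAt)
  have h2 : |y x - y u| ≤ ε * (x - u) := by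
    have h3 := hb t (hsub (Ioo_subset_Icc_self ht))
    rwa [e1, abs_div, abs_of_pos (sub_pos.2 hux), div_le_iff₀ (sub_pos.2 hux)] at h3
  calc |y x - y x0| = |(y x - y u) + (y u - y x0)| := by congr 1; ring
    _ ≤ |y x - y u| + |y u - y x0| := abs_add_le _ _
    _ ≤ ε * (x - x0) := by linarith

/-- A continuous function satisfying `k y' + y = g` with `y' = deriv y`, which is `0` by convention
where `y` is not differentiable, is differentiable everywhere. -/
theorem differentiableAt_of_relation {c d x0 : ℝ} (hx0 : x0 ∈ Ioo c d) {g k y : ℝ → ℝ}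
    (hg : ContDiffOn ℝ 1 g (Ioo c d)) (hk : ContinuousOn k (Ioo c d))
    (hk0 : ∀ x ∈ Ioo c d, k x ≠ 0) (hy : ContinuousOn y (Ioo c d))
    (hode : ∀ x ∈ Ioo c d, k x * deriv y x + y x = g x) : DifferentiableAt ℝ y x0 := by
  by_contra hnd
  have hI := isOpen_Ioo.mem_nhds hx0
  have hgd : ∀ t ∈ Ioo c d, DifferentiableAt ℝ g t := fun t ht =>
    (hg.differentiableOn one_ne_zero).differentiableAt (isOpen_Ioo.mem_nhds ht)
  have hg'c : ContinuousAt (deriv g) x0 :=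
    (hg.continuousOn_deriv_of_isOpen isOpen_Ioo le_rfl).continuousAt hI
  have hd0 : deriv y x0 = 0 := deriv_zero_of_not_differentiableAt hnd
  have hyg0 : y x0 = g x0 := by have := hode x0 hx0; rw [hd0] at this; linarith
  have hdiff : ∀ t ∈ Ioo c d, y t ≠ g t → DifferentiableAt ℝ y t := by
    intro t ht hne
    by_contra hnd'
    have := hode t ht
    rw [deriv_zero_of_not_differentiableAt hnd'] at this
    exact hne (by linarith)
  have hDc : ContinuousAt (deriv y) x0 := by
    have : ContinuousAt (fun t => (g t - y t) / k t) x0 :=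
      ((hg.continuousOn.continuousAt hI).sub (hy.continuousAt hI)).div (hk.continuousAt hI)
        (hk0 x0 hx0)
    refine this.congr ?_
    filter_upwards [hI] with t ht
    rw [div_eq_iff (hk0 t ht)]
    linarith [hode t ht]
  have hDε : ∀ ε > 0, ∀ᶠ t in 𝓝 x0, |deriv y t| ≤ ε := by
    intro ε hε
    have := hDc.abs.eventually (gt_mem_nhds (show |deriv y x0| < ε by simpa [hd0] using hε))
    filter_upwards [this] with t ht using ht.le
  -- on the coincidence set `{y = g}` the function `g` has increments `o(t - x0)`
  have hZε : ∀ ε > 0, ∀ᶠ t in 𝓝 x0, y t = g t → |g t - g x0| ≤ ε * |t - x0| := by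
    intro ε hε
    by_cases hg0 : deriv g x0 = 0
    · have h1 := (hgd x0 hx0).hasDerivAt
      rw [hg0, hasDerivAt_iff_isLittleO] at h1
      filter_upwards [h1.def hε] with t ht _
      simpa using ht
    · -- if `g' x0 ≠ 0` the coincidence set is isolated at `x0`
      have hpos : 0 < |deriv g x0| := abs_pos.2 hg0
      have e1 : ∀ᶠ t in 𝓝 x0, |deriv g x0| / 2 < |deriv g t| :=
        hg'c.abs.eventually (lt_mem_nhds (by linarith))
      have e2 := hDε (|deriv g x0| / 2) (by linarith)
      obtain ⟨δ, hδ, hball⟩ := Metric.eventually_nhds_iff_ball.1 ((e1.and e2).and hI)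
      filter_upwards [Metric.ball_mem_nhds x0 hδ] with t ht heq
      have hseg : ∀ u v, u ∈ Metric.ball x0 δ → v ∈ Metric.ball x0 δ → u < v →
          y u = g u → y v = g v → False := by
        intro u v hu hv huv hyu hyv
        have hsub : Icc u v ⊆ Metric.ball x0 δ := by
          rw [Real.ball_eq_Ioo] at hu hv ⊢
          exact fun s hs => ⟨hu.1.trans_le hs.1, hs.2.trans_lt hv.2⟩
        obtain ⟨s, hs, hs'⟩ := exists_deriv_le_between huv
          (fun s hs => (hy s (hball s (hsub hs)).2).mono
            (fun r hr => (hball r (hsub hr)).2))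
          (fun s hs => hgd s (hball s (hsub hs)).2) hyu hyv
          (fun s hs => (hball s (hsub hs)).1.2)
          (fun s hs => hdiff s (hball s (hsub hs)).2)
        exact absurd hs' (not_le.2 (hball s (hsub hs)).1.1)
      rcases lt_trichotomy t x0 with h1 | h1 | h1
      · exact (hseg t x0 ht (Metric.mem_ball_self hδ) h1 heq hyg0).elim
      · simp [h1]
      · exact (hseg x0 t (Metric.mem_ball_self hδ) ht h1 hyg0 heq).elim
  -- hence `y` itself has derivative `0` at `x0`
  refine hnd (HasDerivAt.differentiableAt (f' := 0) ?_)
  rw [hasDerivAt_iff_isLittleO, Asymptotics.isLittleO_iff]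
  intro ε hε
  obtain ⟨δ, hδ, hball⟩ := Metric.eventually_nhds_iff_ball.1 (((hDε ε hε).and (hZε ε hε)).and hI)
  filter_upwards [Metric.ball_mem_nhds x0 hδ] with x hx
  simp only [smul_zero, sub_zero, Real.norm_eq_abs]
  rcases le_total x0 x with hle | hle
  · have hsub : Icc x0 x ⊆ Metric.ball x0 δ := by
      rw [Real.ball_eq_Ioo] at hx ⊢
      exact fun s hs => ⟨by linarith [hs.1], hs.2.trans_lt hx.2⟩
    have hsub' : Icc x0 x ⊆ Ioo c d := fun r hr => (hball r (hsub hr)).2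
    rw [abs_of_nonneg (sub_nonneg.2 hle)]
    exact abs_sub_le_right hle (hy.mono hsub') (hg.continuousOn.mono hsub') hyg0
      (fun t ht => (hball t (hsub ht)).1.1) (fun t ht => hdiff t (hsub' ht))
      (fun t ht heq => by
        have := (hball t (hsub ht)).1.2 heq
        rwa [abs_of_nonneg (sub_nonneg.2 ht.1)] at this)
  · have hsub : ∀ t ∈ Icc (-x0) (-x), -t ∈ Metric.ball x0 δ := by
      intro t ht
      rw [Real.ball_eq_Ioo] at hx ⊢
      exact ⟨by linarith [ht.2, hx.1], by linarith [ht.1]⟩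
    have hsub' : MapsTo (fun t : ℝ => -t) (Icc (-x0) (-x)) (Ioo c d) := fun r hr =>
      (hball _ (hsub r hr)).2
    have := abs_sub_le_right (x0 := -x0) (x := -x) (ε := ε) (by linarith)
      (g := fun t => g (-t)) (y := fun t => y (-t))
      (hy.comp continuous_neg.continuousOn hsub')
      (hg.continuousOn.comp continuous_neg.continuousOn hsub') (by simpa using hyg0)
      (fun t ht => by
        rw [deriv_comp_neg, abs_neg]; exact (hball _ (hsub t ht)).1.1)
      (fun t ht hne => (hdiff (-t) (hsub' ht) hne).comp t differentiableAt_id.neg)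
      (fun t ht heq => by
        have := (hball _ (hsub t ht)).1.2 heq
        rw [abs_of_nonpos (show -t - x0 ≤ 0 by linarith [ht.1])] at this
        simp only [neg_neg]
        linarith)
    simp only [neg_neg] at this
    rw [abs_of_nonpos (show x - x0 ≤ 0 by linarith)]
    linarith

/-! ### The general solution on one side -/

theorem exists_integration_const {c d : ℝ} {p q r y w W : ℝ → ℝ}
    (hp : ContDiffOn ℝ 1 p (Ioo c d)) (hq : ContDiffOn ℝ 1 q (Ioo c d))
    (hr : ContDiffOn ℝ 1 r (Ioo c d)) (hp0 : ∀ x ∈ Ioo c d, p x ≠ 0)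
    (hq0 : ∀ x ∈ Ioo c d, q x ≠ 0) (hy : ContinuousOn y (Ioo c d))
    (hode : ∀ x ∈ Ioo c d, p x * deriv y x + q x * y x = r x)
    (hw : ∀ x ∈ Ioo c d, HasDerivAt w (q x / p x) x)
    (hW : ∀ x ∈ Ioo c d, HasDerivAt W (Real.exp (w x) * r x / p x) x) :
    ∃ C : ℝ, EqOn y (fun x => Real.exp (-(w x)) * (W x + C)) (Ioo c d) := by
  have hyd : ∀ x ∈ Ioo c d, HasDerivAt y (deriv y x) x := fun x hx =>
    (differentiableAt_of_relation hx (hr.div hq hq0) (hp.continuousOn.div hq.continuousOn hq0)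
      (fun t ht => div_ne_zero (hp0 t ht) (hq0 t ht)) hy (fun t ht => by
        have h1 := hq0 t ht
        simp only [Pi.div_apply, ← hode t ht]
        field_simp)).hasDerivAt
  have hder : ∀ x ∈ Ioo c d, HasDerivAt (fun x => Real.exp (w x) * y x - W x) 0 x := by
    intro x hx
    refine (((hw x hx).exp.fun_mul (hyd x hx)).fun_sub (hW x hx)).congr_deriv ?_
    have h1 := hp0 x hx
    rw [← hode x hx]
    field_simp
    ring
  obtain ⟨C, hC⟩ := isOpen_Ioo.exists_is_const_of_deriv_eq_zero isPreconnected_Ioo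
    (fun x hx => (hder x hx).differentiableAt.differentiableWithinAt)
    (fun x hx => (hder x hx).deriv)
  refine ⟨C, fun x hx => ?_⟩
  simp only [← hC x hx, add_sub_cancel, ← mul_assoc, ← Real.exp_add, neg_add_cancel, Real.exp_zero,
    one_mul]

theorem hasDerivAt_general {p q r w W : ℝ → ℝ} {x C : ℝ} (hp0 : p x ≠ 0)
    (hw : HasDerivAt w (q x / p x) x) (hW : HasDerivAt W (Real.exp (w x) * r x / p x) x) :
    HasDerivAt (fun x => Real.exp (-(w x)) * (W x + C))
      ((r x - q x * (Real.exp (-(w x)) * (W x + C))) / p x) x := by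
  refine (hw.fun_neg.exp.fun_mul (hW.add_const C)).congr_deriv ?_
  have h1 : Real.exp (-(w x)) * Real.exp (w x) = 1 := by rw [← Real.exp_add]; simp
  have h2 : Real.exp (-(w x)) * (Real.exp (w x) * r x / p x) = r x / p x := by
    rw [← mul_div_assoc, ← mul_assoc, h1, one_mul]
  rw [h2]
  field_simp
  ring

/-- **Proposition B(iii).** -/
theorem two_parameter_family
    (a b xh : ℝ) (hx : xh ∈ Ioo a b) (m : ℕ∞)
    (p q r : ℝ → ℝ) (lp lq lr : ℕ)
    (hpC : ContDiffOn ℝ m p (Ioo a b))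
    (hqC : ContDiffOn ℝ m q (Ioo a b))
    (hrC : ContDiffOn ℝ m r (Ioo a b))
    (hlpm : (lp : ℕ∞) < m) (hlqm : (lq : ℕ∞) < m)
    (hzp : HasZeroOfOrder p xh lp)
    (hzq : HasZeroOfOrder q xh lq)
    (hzr : HasZeroOfOrder r xh lr)
    (hnop : ∀ x ∈ Ioo a b, x ≠ xh → p x ≠ 0)
    (hnoq : ∀ x ∈ Ioo a b, x ≠ xh → q x ≠ 0)
    (hl : lp = lq + 1) (hlr : lq ≤ lr)
    (h : ℝ → ℝ)
    (hhC : ContDiffOn ℝ 1 h (Ioo a b))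
    (hhq : ∀ x ∈ Ioo a b, q x ≠ 0 → h x = p x / q x)
    (hh0 : h xh = 0)
    (hh' : deriv h xh < 0) :
    -- for any antiderivatives `w∓, W∓` giving the general solution on the two sides:
    ∀ wm Wm wp Wp : ℝ → ℝ,
      (∀ x ∈ Ioo a xh, HasDerivAt wm (q x / p x) x) →
      (∀ x ∈ Ioo a xh, HasDerivAt Wm (Real.exp (wm x) * r x / p x) x) →
      (∀ x ∈ Ioo xh b, HasDerivAt wp (q x / p x) x) →
      (∀ x ∈ Ioo xh b, HasDerivAt Wp (Real.exp (wp x) * r x / p x) x) →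
      ∀ n : ℕ, (n : ℕ∞) ≤ m - lq → (n : ℝ) < |deriv h xh|⁻¹ →
        -- every pair of integration constants gives exactly one C^n solution:
        (∀ cm cp : ℝ,
          (∃ y : ℝ → ℝ,
            ContDiffOn ℝ n y (Ioo a b) ∧
            (∀ x ∈ Ioo a b, x ≠ xh → p x * deriv y x + q x * y x = r x) ∧
            EqOn y (fun x => Real.exp (-(wm x)) * (Wm x + cm)) (Ioo a xh) ∧
            EqOn y (fun x => Real.exp (-(wp x)) * (Wp x + cp)) (Ioo xh b)) ∧
          (∀ y y' : ℝ → ℝ,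
            (ContDiffOn ℝ n y (Ioo a b) ∧
              (∀ x ∈ Ioo a b, x ≠ xh → p x * deriv y x + q x * y x = r x) ∧
              EqOn y (fun x => Real.exp (-(wm x)) * (Wm x + cm)) (Ioo a xh) ∧
              EqOn y (fun x => Real.exp (-(wp x)) * (Wp x + cp)) (Ioo xh b)) →
            (ContDiffOn ℝ n y' (Ioo a b) ∧
              (∀ x ∈ Ioo a b, x ≠ xh → p x * deriv y' x + q x * y' x = r x) ∧
              EqOn y' (fun x => Real.exp (-(wm x)) * (Wm x + cm)) (Ioo a xh) ∧
              EqOn y' (fun x => Real.exp (-(wp x)) * (Wp x + cp)) (Ioo xh b)) →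
            EqOn y y' (Ioo a b))) ∧
        -- and every C^n solution arises this way:
        (∀ y : ℝ → ℝ, ContDiffOn ℝ n y (Ioo a b) →
          (∀ x ∈ Ioo a b, x ≠ xh → p x * deriv y x + q x * y x = r x) →
          ∃ cm cp : ℝ,
            EqOn y (fun x => Real.exp (-(wm x)) * (Wm x + cm)) (Ioo a xh) ∧
            EqOn y (fun x => Real.exp (-(wp x)) * (Wp x + cp)) (Ioo xh b)) := by
  intro wm Wm wp Wp hwm hWm hwp hWp n hn hnh
  have hU := isOpen_Ioo.mem_nhds hx
  have hnm : ((n + lq : ℕ) : ℕ∞) ≤ m := by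
    cases m with
    | top => exact le_top
    | coe m => norm_cast at hn hlqm ⊢; omega
  have hm1 : (1 : WithTop ℕ∞) ≤ (m : WithTop ℕ∞) := by
    have : (1 : ℕ∞) ≤ m := Order.one_le_iff_pos.2 (lt_of_le_of_lt zero_le hlqm)
    exact_mod_cast this
  have hnm' : ((n + lq : ℕ) : WithTop ℕ∞) ≤ (m : WithTop ℕ∞) := by exact_mod_cast hnm
  have hL : Ioo a xh ⊆ Ioo a b := Ioo_subset_Ioo_right hx.2.le
  have hR : Ioo xh b ⊆ Ioo a b := Ioo_subset_Ioo_left hx.1.le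
  refine ⟨fun cm cp => ⟨?_, ?_⟩, ?_⟩
  · -- cancel the common factor `(x - xh) ^ lq`
    obtain ⟨P, hPC, hP, -⟩ := exists_factor hx n lq p (hpC.of_le hnm')
      (fun k hk => hzp.1 k (by omega))
    obtain ⟨Q, hQC, hQ, hQ0⟩ := exists_factor hx n lq q (hqC.of_le hnm') hzq.1
    obtain ⟨R, hRC, hR', -⟩ := exists_factor hx n lq r (hrC.of_le hnm')
      (fun k hk => hzr.1 k (by omega))
    have hQne : ∀ x ∈ Ioo a b, Q x ≠ 0 := by
      intro x hxI
      by_cases hne : x = xh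
      · rw [hne, hQ0]
        exact div_ne_zero hzq.2 (by positivity)
      · intro h0
        exact hnoq x hxI hne (by rw [hQ x hxI, h0, mul_zero])
    have hhPQ : ∀ x ∈ Ioo a b, x ≠ xh → h x = P x / Q x := by
      intro x hxI hne
      have h3 : x - xh ≠ 0 := sub_ne_zero.2 hne
      rw [hhq x hxI (hnoq x hxI hne), hP x hxI, hQ x hxI, mul_div_mul_left _ _ (pow_ne_zero _ h3)]
    have hPQC : ContDiffOn ℝ n (fun x => P x / Q x) (Ioo a b) := hPC.div hQC hQne
    have hhxh : h xh = P xh / Q xh := by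
      refine tendsto_nhds_unique
        ((hhC.continuousOn.continuousAt hU).mono_left nhdsWithin_le_nhds : Tendsto h (𝓝[≠] xh) _)
        (((hPQC.continuousOn.continuousAt hU).mono_left
          (nhdsWithin_le_nhds : 𝓝[≠] xh ≤ 𝓝 xh)).congr' ?_)
      filter_upwards [mem_nhdsWithin_of_mem_nhds hU, self_mem_nhdsWithin] with x h1 h2
      exact (hhPQ x h1 h2).symm
    have hhn : ContDiffOn ℝ n h (Ioo a b) := hPQC.congr (fun x hxI => by
      by_cases hne : x = xh
      · rw [hne, hhxh]
      · exact hhPQ x hxI hne)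
    have hhne : ∀ x ∈ Ioo a b, x ≠ xh → h x ≠ 0 := fun x hxI hne => by
      rw [hhq x hxI (hnoq x hxI hne)]
      exact div_ne_zero (hnop x hxI hne) (hnoq x hxI hne)
    let z : ℝ → ℝ := fun x => if x < xh then Real.exp (-(wm x)) * (Wm x + cm)
      else Real.exp (-(wp x)) * (Wp x + cp)
    have hzL : EqOn z (fun x => Real.exp (-(wm x)) * (Wm x + cm)) (Ioo a xh) := fun x hx' =>
      if_pos hx'.2
    have hzR : EqOn z (fun x => Real.exp (-(wp x)) * (Wp x + cp)) (Ioo xh b) := fun x hx' =>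
      if_neg (not_lt.2 hx'.1.le)
    have hzd : ∀ x ∈ Ioo a b, x ≠ xh → HasDerivAt z ((r x - q x * z x) / p x) x := by
      intro x hxI hne
      rcases lt_or_gt_of_ne hne with hlt | hlt
      · have hx' : x ∈ Ioo a xh := ⟨hxI.1, hlt⟩
        rw [hzL hx']
        exact (hasDerivAt_general (C := cm) (hnop x hxI hne) (hwm x hx')
          (hWm x hx')).congr_of_eventuallyEq (hzL.eventuallyEq_of_mem (isOpen_Ioo.mem_nhds hx'))
      · have hx' : x ∈ Ioo xh b := ⟨hlt, hxI.2⟩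
        rw [hzR hx']
        exact (hasDerivAt_general (C := cp) (hnop x hxI hne) (hwp x hx')
          (hWp x hx')).congr_of_eventuallyEq (hzR.eventuallyEq_of_mem (isOpen_Ioo.mem_nhds hx'))
    have hpos : 0 < (1 : ℝ) + n * deriv h xh := by
      have h1 : 0 < -deriv h xh := by linarith
      rw [abs_of_neg hh', ← one_div, lt_div_iff₀ h1] at hnh
      linarith
    obtain ⟨y, hyC, hyz⟩ := extend_of_neg hx hhC hhne hh0 hh' n (fun _ => 1) (fun x => R x / Q x) z
      hpos hhn contDiffOn_const (hRC.div hQC hQne) (fun x hxI hne => by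
        refine (hzd x hxI hne).congr_deriv ?_
        have h1 := hnop x hxI hne
        have h2 := hnoq x hxI hne
        have h3 : R x / Q x = r x / q x := by
          rw [hR' x hxI, hQ x hxI, mul_div_mul_left _ _ (pow_ne_zero _ (sub_ne_zero.2 hne))]
        rw [hhq x hxI h2, h3]
        field_simp)
    refine ⟨y, hyC, fun x hxI hne => ?_, fun x hx' => ?_, fun x hx' => ?_⟩
    · rw [(hasDerivAt_congr_off hxI hne hyz (hzd x hxI hne)).deriv, hyz x hxI hne,
        mul_div_cancel₀ _ (hnop x hxI hne)]
      ring
    · rw [hyz x (hL hx') hx'.2.ne, hzL hx']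
    · rw [hyz x (hR hx') hx'.1.ne', hzR hx']
  · rintro y y' ⟨hyC, -, hyL, hyR⟩ ⟨hyC', -, hyL', hyR'⟩
    have hoff : ∀ x ∈ Ioo a b, x ≠ xh → y x = y' x := by
      intro x hxI hne
      rcases lt_or_gt_of_ne hne with hlt | hlt
      · rw [hyL ⟨hxI.1, hlt⟩, hyL' ⟨hxI.1, hlt⟩]
      · rw [hyR ⟨hlt, hxI.2⟩, hyR' ⟨hlt, hxI.2⟩]
    intro x hxI
    by_cases hne : x = xh
    · rw [hne]
      refine tendsto_nhds_unique
        ((hyC.continuousOn.continuousAt hU).mono_left nhdsWithin_le_nhds : Tendsto y (𝓝[≠] xh) _)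
        (((hyC'.continuousOn.continuousAt hU).mono_left
          (nhdsWithin_le_nhds : 𝓝[≠] xh ≤ 𝓝 xh)).congr' ?_)
      filter_upwards [mem_nhdsWithin_of_mem_nhds hU, self_mem_nhdsWithin] with t h1 h2
      exact (hoff t h1 h2).symm
    · exact hoff x hxI hne
  · intro y hyC hode
    have hp1 := hpC.of_le hm1
    have hq1 := hqC.of_le hm1
    have hr1 := hrC.of_le hm1
    obtain ⟨cm, hcm⟩ := exists_integration_const (hp1.mono hL) (hq1.mono hL) (hr1.mono hL)
      (fun x hx' => hnop x (hL hx') hx'.2.ne) (fun x hx' => hnoq x (hL hx') hx'.2.ne)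
      (hyC.continuousOn.mono hL) (fun x hx' => hode x (hL hx') hx'.2.ne) hwm hWm
    obtain ⟨cp, hcp⟩ := exists_integration_const (hp1.mono hR) (hq1.mono hR) (hr1.mono hR)
      (fun x hx' => hnop x (hR hx') hx'.1.ne') (fun x hx' => hnoq x (hR hx') hx'.1.ne')
      (hyC.continuousOn.mono hR) (fun x hx' => hode x (hR hx') hx'.1.ne') hwp hWp
    exact ⟨cm, cp, hcm, hcp⟩

end SingularODE18
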